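/- arXiv:2502.14879 — 5 statements merged into one kernel-verified Lean document; each statement's English description precedes it below -/
import Mathlib

section
/- A choice function c on a finite nonempty set X is a shortlisting if and only if it is a choice with optimal limited attention. -/
open Finset

variable {X : Type*} [DecidableEq X]

/-- `a` is the `r`-greatest element among those satisfying `P`. -/
def IsRMax (r : X → X → Prop) (P : X → Prop) (a : X) : Prop :=
  P a ∧ ∀ y, P y → y ≠ a → r a y

/-- `a` is the `r`-least element among those satisfying `P`. -/
def IsRMin (r : X → X → Prop) (P : X → Prop) (a : X) : Prop :=
  P a ∧ ∀ y, P y → y ≠ a → r y a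

def Asym (r : X → X → Prop) : Prop := ∀ x y, r x y → ¬ r y x

def StrictPartial (r : X → X → Prop) : Prop :=
  Asym r ∧ ∀ x y z, r x y → r y z → r x z

def StrictLinear (r : X → X → Prop) : Prop :=
  StrictPartial r ∧ ∀ x y : X, x ≠ y → r x y ∨ r y x

/-- No cycle `x₁ ≻ x₂ ≻ … ≻ xₙ ≻ x₁` with `n ≥ 3`. -/
def Acyclic (r : X → X → Prop) : Prop :=
  ¬ ∃ (n : ℕ) (f : ℕ → X), 3 ≤ n ∧ (∀ i, i + 1 < n → r (f i) (f (i + 1))) ∧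
    r (f (n - 1)) (f 0)

def ChoiceFun (c : Finset X → X) : Prop :=
  ∀ A : Finset X, A.Nonempty → c A ∈ A

def ChoiceCorr (Γ : Finset X → Finset X) : Prop :=
  ∀ A : Finset X, A.Nonempty → (Γ A).Nonempty ∧ Γ A ⊆ A

/-- `x ∈ max(A, r)`: `x` is in `A` and is undominated in `A` w.r.t. `r`. -/
def MaxOf (r : X → X → Prop) (A : Finset X) (x : X) : Prop :=
  x ∈ A ∧ ∀ y ∈ A, ¬ r y x

/-- The pair `(gt, rhd)` describes `c` as a shortlisting. -/
def Describes (gt rhd : X → X → Prop) (c : Finset X → X) : Prop :=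
  StrictPartial gt ∧ StrictLinear rhd ∧
    ∀ A : Finset X, A.Nonempty → IsRMax rhd (MaxOf gt A) (c A)

def Shortlisting (c : Finset X → X) : Prop :=
  ∃ gt rhd : X → X → Prop, Describes gt rhd c

/-- Optimal attention filter. -/
def OptimalFilter (Γ : Finset X → Finset X) : Prop :=
  ChoiceCorr Γ ∧
  (∀ B : Finset X, B.Nonempty → ∀ x ∈ B, x ∉ Γ B → Γ (B.erase x) ⊆ Γ B) ∧
  (∀ B : Finset X, B.Nonempty → ∀ x ∈ B, ∀ y : X,
    y ∈ Γ {x, y} → y ∈ Γ (B.erase x) → y ∈ Γ B) ∧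
  (∀ B : Finset X, B.Nonempty → ∀ x ∈ B, (B.erase x).Nonempty →
    (Γ B).erase x ⊆ Γ (B.erase x))

/-- `(Γ, rhd)` is an explanation by optimal limited attention of `c`. -/
def ExplByOLA (Γ : Finset X → Finset X) (rhd : X → X → Prop) (c : Finset X → X) : Prop :=
  OptimalFilter Γ ∧ StrictLinear rhd ∧
    ∀ A : Finset X, A.Nonempty → IsRMax rhd (· ∈ Γ A) (c A)

/-- Choice with optimal limited attention. -/
def COLA (c : Finset X → X) : Prop :=
  ∃ (Γ : Finset X → Finset X) (rhd : X → X → Prop), ExplByOLA Γ rhd c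

/-- Salient attention filter relative to `rhd`. -/
def SalientFilter (rhd : X → X → Prop) (Γ : Finset X → Finset X) : Prop :=
  ChoiceCorr Γ ∧
  ∀ B : Finset X, B.Nonempty → ∀ x ∈ B,
    ¬ IsRMin rhd (· ∈ B) x → ¬ IsRMax rhd (· ∈ Γ B) x →
      (Γ B).erase x = Γ (B.erase x)

/-- `(Γ, rhd)` is an explanation by salient limited attention of `c`. -/
def ExplBySLA (Γ : Finset X → Finset X) (rhd : X → X → Prop) (c : Finset X → X) : Prop :=
  StrictLinear rhd ∧ SalientFilter rhd Γ ∧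
    ∀ A : Finset X, A.Nonempty → IsRMax rhd (· ∈ Γ A) (c A)

/-- Choice with salient limited attention. -/
def CSLA (c : Finset X → X) : Prop :=
  ∃ (Γ : Finset X → Finset X) (rhd : X → X → Prop), ExplBySLA Γ rhd c

/-- Selective salient attention filter relative to `rhd`. -/
def SelectiveFilter (rhd : X → X → Prop) (Γ : Finset X → Finset X) : Prop :=
  ChoiceCorr Γ ∧
  ∀ B : Finset X, B.Nonempty → ∀ x ∈ B,
    ¬ IsRMax rhd (· ∈ Γ B) x → (Γ B).erase x = Γ (B.erase x)

/-- Choice with selective salient limited attention. -/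
def CSSLA (c : Finset X → X) : Prop :=
  ∃ (Γ : Finset X → Finset X) (rhd : X → X → Prop),
    StrictLinear rhd ∧ SelectiveFilter rhd Γ ∧
      ∀ A : Finset X, A.Nonempty → IsRMax rhd (· ∈ Γ A) (c A)

def Rationalizable (c : Finset X → X) : Prop :=
  ∃ rhd : X → X → Prop, StrictLinear rhd ∧
    ∀ A : Finset X, A.Nonempty → IsRMax rhd (· ∈ A) (c A)

/-- Competitive attention filter relative to `rhd`. -/
def CompetitiveFilter (rhd : X → X → Prop) (Γ : Finset X → Finset X) : Prop :=
  ChoiceCorr Γ ∧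
  (∀ A : Finset X, A.Nonempty → ∀ x ∈ A, x ∉ Γ A → Γ A = Γ (A.erase x)) ∧
  (∀ A : Finset X, 1 < A.card → ∀ x y : X,
    IsRMax rhd (· ∈ A) y → IsRMax rhd (· ∈ Γ (A.erase y)) x →
      (y ∈ Γ {x, y} ↔ y ∈ Γ A))

/-- `(Γ, rhd)` is an explanation by competitive limited attention of `c`. -/
def ExplByCCLA (Γ : Finset X → Finset X) (rhd : X → X → Prop) (c : Finset X → X) : Prop :=
  StrictLinear rhd ∧ CompetitiveFilter rhd Γ ∧
    ∀ A : Finset X, A.Nonempty → IsRMax rhd (· ∈ Γ A) (c A)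

/-- Choice with competitive limited attention. -/
def CCLA (c : Finset X → X) : Prop :=
  ∃ (Γ : Finset X → Finset X) (rhd : X → X → Prop), ExplByCCLA Γ rhd c

/-- The list `f` list rationalizes `c`. -/
def ListRationalizes (f : X → X → Prop) (c : Finset X → X) : Prop :=
  StrictLinear f ∧
    ∀ A : Finset X, 1 < A.card → ∀ l : X, IsRMax f (· ∈ A) l →
      c A = c {c (A.erase l), l}

def ListRational (c : Finset X → X) : Prop :=
  ∃ f : X → X → Prop, ListRationalizes f c

/-- `(u, v, W)` is a general-temptation representation of `c`. -/
def GTRrep (c : Finset X → X) (u v : X → ℝ) (W : ℝ → ℝ → ℝ) : Prop :=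
  (∀ r s : ℝ, 0 ≤ W r s) ∧
  (∀ r₁ r₂ s : ℝ, r₁ < r₂ → W r₁ s < W r₂ s) ∧
  (∀ r s₁ s₂ : ℝ, s₁ < s₂ → W r s₁ < W r s₂) ∧
  ∀ (A : Finset X) (hA : A.Nonempty),
    c A ∈ A ∧ ∀ x ∈ A, x ≠ c A →
      W (u x) (v x - A.sup' hA v) < W (u (c A)) (v (c A) - A.sup' hA v)

def HasGTR (c : Finset X → X) : Prop :=
  ∃ (u v : X → ℝ) (W : ℝ → ℝ → ℝ), GTRrep c u v W

/-- `(gg, U)` is a conspicuity based endogenous reference representation of `c`. -/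
def CERrep (c : Finset X → X) (gg : X → X → Prop) (U : X → X → ℝ) : Prop :=
  StrictLinear gg ∧ (∀ z : X, Function.Injective (U z)) ∧
  ∀ A : Finset X, A.Nonempty → ∀ m : X, IsRMax gg (· ∈ A) m →
    c A ∈ A ∧ ∀ x ∈ A, x ≠ c A → U m x < U m (c A)

def HasCER (c : Finset X → X) : Prop :=
  ∃ (gg : X → X → Prop) (U : X → X → ℝ), CERrep c gg U

/-- `(A, B)` is a switch of `c`. -/
def Switch (c : Finset X → X) (A B : Finset X) : Prop :=
  A.Nonempty ∧ A ⊆ B ∧ c B ∈ A ∧ c A ≠ c B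

/-- Revealed salience: `x ⊨_c y`. -/
def RevSal (c : Finset X → X) (x y : X) : Prop :=
  ∃ A : Finset X, x ∈ A ∧ y ∈ A ∧ x ≠ c A ∧ c (A.erase x) ≠ c A

/-- Axiom of Revealed Temptation. -/
def ART (c : Finset X → X) : Prop :=
  ∀ B : Finset X, B.Nonempty → ∃ x ∈ B,
    ∀ B' B'' : Finset X, x ∈ B' → B' ⊂ B'' → B'' ⊆ B → ¬ Switch c B' B''

/-- The revealed relation `R^c`. -/
def Rrel (c : Finset X → X) (x y : X) : Prop :=
  (∃ A : Finset X, A.Nonempty ∧ x = c (insert y A) ∧ x ≠ c A) ∨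
  (∃ A : Finset X, A.Nonempty ∧ y = c (insert x A) ∧ x = c {x, y}) ∨
  (∃ A : Finset X, A.Nonempty ∧ y ≠ c (insert x A) ∧ y = c {x, y} ∧ y = c A)

/-- The revealed-to-follow relation `F_c`. -/
def Frel (c : Finset X → X) (x y : X) : Prop :=
  (∃ A : Finset X, A.Nonempty ∧ x = c (insert y A) ∧ y = c {x, y}) ∨
  (∃ A : Finset X, A.Nonempty ∧ x = c (insert y A) ∧ x ≠ c A) ∨
  (∃ A : Finset X, A.Nonempty ∧ x ≠ c (insert y A) ∧ x = c {x, y} ∧ x = c A)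

/-!
On nonempty menus, optimal attention filters are exactly the correspondences `A ↦ max(A, >)` with
`>` a strict partial order, so the two models coincide with the same linear order on both sides. The
relation is read off pairs: `x > y` when `y` goes unnoticed in `{x, y}`. Property (c) propagates
attention from a menu down to its pairs and (b) propagates it back up, so together they say that `Γ`
selects the undominated alternatives; property (a) is then transitivity of `>`.
-/

section Undominated

variable {α : Type*} {r : α → α → Prop} {A B : Finset α} {x y : α}

lemma MaxOf.of_subset (hy : MaxOf r B y) (hAB : A ⊆ B) (hyA : y ∈ A) : MaxOf r A y :=
  ⟨hyA, fun x hx => hy.2 x (hAB hx)⟩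

lemma MaxOf.of_erase [DecidableEq α] (hy : MaxOf r (B.erase x) y) (hxy : ¬ r x y) :
    MaxOf r B y := by
  refine ⟨mem_of_mem_erase hy.1, fun z hz hzy => ?_⟩
  have hzx : z ≠ x := by
    rintro rfl
    exact hxy hzy
  exact hy.2 z (mem_erase.2 ⟨hzx, hz⟩) hzy

lemma Asym.irrefl (h : Asym r) (x : α) : ¬ r x x :=
  fun hx => h x x hx hx

lemma StrictPartial.exists_maxOf (h : StrictPartial r) (hA : A.Nonempty) : ∃ a, MaxOf r A a := by
  have : IsStrictOrder α r := { irrefl := h.1.irrefl, trans := h.2 }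
  obtain ⟨x, hx⟩ := hA
  obtain ⟨⟨a, haA⟩, -, ha⟩ := (A.wellFoundedOn (r := r)).has_min Set.univ ⟨⟨x, hx⟩, trivial⟩
  exact ⟨a, haA, fun y hy => ha ⟨y, hy⟩ trivial⟩

open Classical in
/-- The menu `max(A, r)` of undominated alternatives, as a choice correspondence; `MaxOf r A` is
the corresponding predicate. -/
noncomputable def maxSet (r : α → α → Prop) (A : Finset α) : Finset α :=
  A.filter (MaxOf r A)

lemma mem_maxSet : y ∈ maxSet r A ↔ MaxOf r A y := by
  classical exact mem_filter.trans (and_iff_right_of_imp And.left)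

lemma StrictPartial.choiceCorr_maxSet (h : StrictPartial r) : ChoiceCorr (maxSet r) := by
  refine fun A hA => ⟨?_, fun x hx => (mem_maxSet.1 hx).1⟩
  obtain ⟨a, ha⟩ := h.exists_maxOf hA
  exact ⟨a, mem_maxSet.2 ha⟩

end Undominated

section Consistency

variable {α : Type*} [DecidableEq α]

/-- Property (a) of optimal attention filters, a form of Aizerman's axiom: removing an unnoticed
alternative does not draw attention to new ones. -/
def AizermanConsistent (Γ : Finset α → Finset α) : Prop :=
  ∀ B : Finset α, ∀ x ∈ B, x ∉ Γ B → Γ (B.erase x) ⊆ Γ B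

/-- Property (b) of optimal attention filters: an alternative noticed in a menu and in its pair with
`x` is still noticed once `x` joins the menu. -/
def BinaryExpansionConsistent (Γ : Finset α → Finset α) : Prop :=
  ∀ B : Finset α, ∀ x ∈ B, ∀ y, y ∈ Γ {x, y} → y ∈ Γ (B.erase x) → y ∈ Γ B

/-- Property (c) of optimal attention filters, Chernoff's axiom for the removal of one alternative:
what is noticed stays noticed in the smaller menu. -/
def ContractionConsistent (Γ : Finset α → Finset α) : Prop :=
  ∀ B : Finset α, ∀ x ∈ B, (B.erase x).Nonempty → (Γ B).erase x ⊆ Γ (B.erase x)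

lemma optimalFilter_iff {Γ : Finset α → Finset α} :
    OptimalFilter Γ ↔ ChoiceCorr Γ ∧ AizermanConsistent Γ ∧ BinaryExpansionConsistent Γ ∧
      ContractionConsistent Γ :=
  and_congr_right' <| and_congr
    ⟨fun h B x hx => h B ⟨x, hx⟩ x hx, fun h B _ => h B⟩ <| and_congr
    ⟨fun h B x hx => h B ⟨x, hx⟩ x hx, fun h B _ => h B⟩
    ⟨fun h B x hx => h B ⟨x, hx⟩ x hx, fun h B _ => h B⟩

lemma StrictPartial.aizermanConsistent_maxSet {r : α → α → Prop} (h : StrictPartial r) :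
    AizermanConsistent (maxSet r) := by
  intro B x hx hxB y hy
  rw [mem_maxSet] at hxB hy ⊢
  obtain ⟨w, hwB, hwx⟩ : ∃ w ∈ B, r w x := by
    by_contra! hmax
    exact hxB ⟨hx, hmax⟩
  have hw : w ∈ B.erase x := mem_erase.2 ⟨fun e => h.1.irrefl x (e ▸ hwx), hwB⟩
  exact hy.of_erase fun hxy => hy.2 w hw (h.2 w x y hwx hxy)

lemma binaryExpansionConsistent_maxSet (r : α → α → Prop) :
    BinaryExpansionConsistent (maxSet r) := by
  intro B x _ y hxy hy
  rw [mem_maxSet] at hxy hy ⊢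
  exact hy.of_erase (hxy.2 x (mem_insert_self x {y}))

lemma contractionConsistent_maxSet (r : α → α → Prop) : ContractionConsistent (maxSet r) := by
  intro B x _ _ y hy
  rw [mem_erase, mem_maxSet] at hy
  exact mem_maxSet.2 (hy.2.of_subset (erase_subset x B) (mem_erase.2 ⟨hy.1, hy.2.1⟩))

theorem StrictPartial.optimalFilter_maxSet {r : α → α → Prop} (h : StrictPartial r) :
    OptimalFilter (maxSet r) :=
  optimalFilter_iff.2 ⟨h.choiceCorr_maxSet, h.aizermanConsistent_maxSet,
    binaryExpansionConsistent_maxSet r, contractionConsistent_maxSet r⟩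

variable {Γ : Finset α → Finset α} {A B : Finset α} {y : α}

lemma ContractionConsistent.mem_of_subset (h : ContractionConsistent Γ) (hAB : A ⊆ B) (hyA : y ∈ A)
    (hy : y ∈ Γ B) : y ∈ Γ A := by
  induction B using Finset.strongInduction with
  | H B ih =>
    obtain rfl | hssub := hAB.eq_or_ssubset
    · exact hy
    · obtain ⟨x, hxB, hxA⟩ := exists_of_ssubset hssub
      have hA : A ⊆ B.erase x := subset_erase.2 ⟨hAB, hxA⟩
      have hyx : y ≠ x := ne_of_mem_erase (hA hyA)
      exact ih (B.erase x) (erase_ssubset hxB) hA <|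
        h B x hxB ⟨y, hA hyA⟩ (mem_erase.2 ⟨hyx, hy⟩)

lemma BinaryExpansionConsistent.mem_of_forall_mem_pair (h : BinaryExpansionConsistent Γ)
    (hyB : y ∈ B) (hpair : ∀ x ∈ B, y ∈ Γ {x, y}) : y ∈ Γ B := by
  induction B using Finset.strongInduction with
  | H B ih =>
    by_cases hB : ∃ x ∈ B, x ≠ y
    · obtain ⟨x, hxB, hxy⟩ := hB
      refine h B x hxB y (hpair x hxB) <|
        ih (B.erase x) (erase_ssubset hxB) (mem_erase.2 ⟨hxy.symm, hyB⟩) fun z hz => ?_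
      exact hpair z (mem_of_mem_erase hz)
    · push Not at hB
      obtain rfl : B = {y} := eq_singleton_iff_unique_mem.2 ⟨hyB, hB⟩
      simpa only [pair_eq_singleton] using hpair y hyB

end Consistency

section RevealedDominance

variable {α : Type*} [DecidableEq α] {Γ : Finset α → Finset α} {B : Finset α} {y : α}

/-- The dominance relation revealed by a choice correspondence on pairs: `x` dominates `y` when `y`
goes unnoticed in `{x, y}`. No alternative dominates itself, because `{x, x}` is a singleton. -/
def RevealedDom (Γ : Finset α → Finset α) (x y : α) : Prop := y ∉ Γ {x, y}

lemma ChoiceCorr.asym_revealedDom (h : ChoiceCorr Γ) : Asym (RevealedDom Γ) := by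
  intro x y hy hx
  obtain ⟨⟨z, hz⟩, hsub⟩ := h {x, y} (insert_nonempty x {y})
  obtain rfl | rfl : z = x ∨ z = y := by simpa only [mem_insert, mem_singleton] using hsub hz
  · exact hx (pair_comm z y ▸ hz)
  · exact hy hz

lemma mem_iff_maxOf_revealedDom (hexp : BinaryExpansionConsistent Γ)
    (hcon : ContractionConsistent Γ) (hsub : Γ B ⊆ B) :
    y ∈ Γ B ↔ MaxOf (RevealedDom Γ) B y := by
  constructor
  · refine fun hy => ⟨hsub hy, fun x hx hxy => hxy ?_⟩
    have hpair : {x, y} ⊆ B := insert_subset hx (singleton_subset_iff.2 (hsub hy))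
    exact hcon.mem_of_subset hpair (mem_insert_of_mem (mem_singleton_self y)) hy
  · exact fun hy => hexp.mem_of_forall_mem_pair hy.1 fun x hx => not_not.1 (hy.2 x hx)

theorem OptimalFilter.mem_iff_maxOf (h : OptimalFilter Γ) (hB : B.Nonempty) :
    y ∈ Γ B ↔ MaxOf (RevealedDom Γ) B y := by
  obtain ⟨hcorr, -, hexp, hcon⟩ := optimalFilter_iff.1 h
  exact mem_iff_maxOf_revealedDom hexp hcon (hcorr B hB).2

theorem OptimalFilter.strictPartial_revealedDom (h : OptimalFilter Γ) :
    StrictPartial (RevealedDom Γ) := by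
  obtain ⟨hcorr, haiz, -, -⟩ := optimalFilter_iff.1 h
  have hasym := hcorr.asym_revealedDom
  refine ⟨hasym, fun x y z hdom_xy hdom_yz hz => ?_⟩
  have hyx : y ≠ x := by
    rintro rfl
    exact hasym.irrefl y hdom_xy
  have hyz : y ≠ z := by
    rintro rfl
    exact hasym.irrefl y hdom_yz
  have hne : ({y, x, z} : Finset α).Nonempty := insert_nonempty y {x, z}
  have hy_unnoticed : y ∉ Γ {y, x, z} := fun hy =>
    ((h.mem_iff_maxOf hne).1 hy).2 x (by simp) hdom_xy
  have hz_noticed : z ∈ Γ {y, x, z} := by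
    refine haiz _ y (mem_insert_self y {x, z}) hy_unnoticed ?_
    rwa [erase_insert (by simp [hyx, hyz])]
  exact ((h.mem_iff_maxOf hne).1 hz_noticed).2 y (mem_insert_self y {x, z}) hdom_yz

end RevealedDominance

theorem stmt_0_general (c : Finset X → X) : Shortlisting c ↔ COLA c := by
  constructor
  · rintro ⟨gt, rhd, hgt, hrhd, hmax⟩
    refine ⟨maxSet gt, rhd, hgt.optimalFilter_maxSet, hrhd, fun A hA => ?_⟩
    simpa only [mem_maxSet] using hmax A hA
  · rintro ⟨Γ, rhd, hΓ, hrhd, hmax⟩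
    refine ⟨RevealedDom Γ, rhd, hΓ.strictPartial_revealedDom, hrhd, fun A hA => ?_⟩
    simpa only [hΓ.mem_iff_maxOf hA] using hmax A hA

/-- A choice function on a finite nonempty set is a shortlisting
if and only if it is a choice with optimal limited attention. -/
theorem stmt_0 [Fintype X] [Nonempty X] (c : Finset X → X) (hc : ChoiceFun c) :
    Shortlisting c ↔ COLA c :=
  stmt_0_general c
end

section
/- Let c be a choice with optimal limited attention (equivalently, a shortlisting) on a finite nonempty set X, and suppose there exist a menu A and x ∈ A such that x ≠ c(A) and c(A) ≠ c(A\{x}). Then for every pair (>,▷) that describes c as a shortlisting: x > c(A\{x}), x ∈ max(A,>), and c(A\{x}) ▷ c(A) ▷ x. -/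
/-!
Let `a` and `b` be the choices from `A` and `A.erase x`. As `a ≠ x` stays undominated in
`A.erase x`, the new choice `b` beats `a` in the second-stage ranking. Were `b` undominated in `A`,
`a` would beat it in turn; so `b` is dominated in `A`, necessarily by `x`. By transitivity nothing
in `A` dominates `x`, since it would also dominate `b` within `A.erase x`. So `x` is shortlisted
in `A` and, not being chosen, lies below `a`.
-/

open Finset

variable {X : Type*} [DecidableEq X]

omit [DecidableEq X] in
theorem MaxOf.mono {r : X → X → Prop} {A B : Finset X} {a : X} (h : MaxOf r A a)
    (hBA : B ⊆ A) (ha : a ∈ B) : MaxOf r B a :=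
  ⟨ha, fun y hy => h.2 y (hBA hy)⟩

theorem MaxOf.of_erase_s1 {r : X → X → Prop} {A : Finset X} {x b : X}
    (hb : MaxOf r (A.erase x) b) (hxb : ¬ r x b) : MaxOf r A b := by
  refine ⟨mem_of_mem_erase hb.1, fun y hy hyb => ?_⟩
  rcases eq_or_ne y x with rfl | hyx
  · exact hxb hyb
  · exact hb.2 y (mem_erase.2 ⟨hyx, hy⟩) hyb

theorem MaxOf.of_rel_of_erase {r : X → X → Prop} {A : Finset X} {x b : X}
    (hr : StrictPartial r) (hx : x ∈ A) (hb : MaxOf r (A.erase x) b) (hxb : r x b) :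
    MaxOf r A x := by
  refine ⟨hx, fun y hy hyx => ?_⟩
  have hne : y ≠ x := by
    rintro rfl
    exact hr.1 y y hyx hyx
  exact hb.2 y (mem_erase.2 ⟨hne, hy⟩) (hr.2 y x b hyx hxb)

theorem stmt_1_general {gt rhd : X → X → Prop} (hgt : StrictPartial gt) (hrhd : Asym rhd)
    {A : Finset X} {x a b : X} (hx : x ∈ A) (ha : IsRMax rhd (MaxOf gt A) a)
    (hb : IsRMax rhd (MaxOf gt (A.erase x)) b) (hxa : x ≠ a) (hab : a ≠ b) :
    gt x b ∧ MaxOf gt A x ∧ rhd b a ∧ rhd a x := by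
  have ha_erase : MaxOf gt (A.erase x) a :=
    ha.1.mono (erase_subset x A) (mem_erase.2 ⟨hxa.symm, ha.1.1⟩)
  have hba : rhd b a := hb.2 a ha_erase hab
  have hxb : gt x b := by
    by_contra hn
    exact hrhd b a hba (ha.2 b (hb.1.of_erase_s1 hn) hab.symm)
  have hx_max : MaxOf gt A x := hb.1.of_rel_of_erase hgt hx hxb
  exact ⟨hxb, hx_max, hba, ha.2 x hx_max hxa⟩

theorem stmt_1 [Fintype X] [Nonempty X] (c : Finset X → X) (hc : ChoiceFun c)
    (hCOLA : COLA c) (A : Finset X) (hA : A.Nonempty) (x : X) (hx : x ∈ A)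
    (h1 : x ≠ c A) (h2 : c A ≠ c (A.erase x)) :
    ∀ gt rhd : X → X → Prop, Describes gt rhd c →
      gt x (c (A.erase x)) ∧ MaxOf gt A x ∧
        rhd (c (A.erase x)) (c A) ∧ rhd (c A) x := by
  intro gt rhd ⟨hgt, hrhd, hmax⟩
  exact stmt_1_general hgt hrhd.1.1 hx (hmax A hA)
    (hmax (A.erase x) ⟨c A, mem_erase.2 ⟨h1.symm, hc A hA⟩⟩) h1 h2
end

section
/- Let c be a choice with optimal limited attention on a finite nonempty set X, and suppose there exist a menu A and x ∈ A such that x ≠ c(A) and c(A) ≠ c(A\{x}). Then for every explanation by optimal limited attention (Γ,▷) of c: x ∈ Γ(A), c(A\{x}) ∉ Γ(A), c(A\{x}) ∉ Γ({c(A\{x}),x}), c(A) ∈ Γ({c(A),x}), and c(A\{x}) ▷ c(A) ▷ x. -/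
/-!
Write `a = c A` and `b = c (A \ {x})`. Removing alternatives one at a time, condition (c) yields
Sen's property α for `Γ`: an alternative noticed in a menu is noticed in each submenu containing it.
Thus `a` is noticed in `A \ {x}` and in `{a, x}`. As `b` is chosen over `a` in `A \ {x}`, `b ▷ a`;
since `a` is the best noticed alternative of `A`, `b` goes unnoticed in `A`. So adding `x` to
`A \ {x}` hides `b`: by (a) this happens only if `x` itself is noticed in `A`, and by (b) only if
`b` is not noticed in `{b, x}`.
-/

open Finset

variable {X : Type*} [DecidableEq X]

theorem IsRMax.not_of_rel {α : Type*} {r : α → α → Prop} {P : α → Prop} {a y : α}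
    (ha : IsRMax r P a) (hr : Asym r) (hya : r y a) : ¬P y := by
  intro hy
  have hne : y ≠ a := by
    rintro rfl
    exact hr y y hya hya
  exact hr y a hya (ha.2 y hy hne)

theorem inter_subset_of_forall_erase_subset {Γ : Finset X → Finset X}
    (hΓ : ∀ B : Finset X, ∀ x ∈ B, (B.erase x).Nonempty → (Γ B).erase x ⊆ Γ (B.erase x))
    {A B : Finset X} (hBA : B ⊆ A) : Γ A ∩ B ⊆ Γ B := by
  intro a ha
  obtain ⟨haΓ, haB⟩ := mem_inter.mp ha
  have hanti : Antitone fun C : Finset X => a ∈ C → a ∈ Γ C := by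
    refine antitone_iff_forall_insert_le.mpr fun C z hz h haC => ?_
    have haz : a ≠ z := ne_of_mem_of_not_mem haC hz
    have hstep := hΓ (insert z C) z (mem_insert_self z C)
    rw [erase_insert hz] at hstep
    exact hstep ⟨a, haC⟩ (mem_erase.mpr ⟨haz, h (mem_insert_of_mem haC)⟩)
  exact hanti hBA (fun _ => haΓ) haB

namespace OptimalFilter

variable {Γ : Finset X → Finset X} {A B : Finset X} {x y : X}

theorem subset_menu (hΓ : OptimalFilter Γ) (hA : A.Nonempty) : Γ A ⊆ A :=
  (hΓ.1 A hA).2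

theorem mem_of_not_subset (hΓ : OptimalFilter Γ) (hx : x ∈ A)
    (hA : ¬Γ (A.erase x) ⊆ Γ A) : x ∈ Γ A :=
  not_imp_comm.mp (hΓ.2.1 A ⟨x, hx⟩ x hx) hA

theorem mem_of_mem_pair (hΓ : OptimalFilter Γ) (hx : x ∈ A) (hyx : y ∈ Γ {y, x})
    (hy : y ∈ Γ (A.erase x)) : y ∈ Γ A :=
  hΓ.2.2.1 A ⟨x, hx⟩ x hx y (pair_comm y x ▸ hyx) hy

theorem inter_subset_of_subset (hΓ : OptimalFilter Γ) (hBA : B ⊆ A) : Γ A ∩ B ⊆ Γ B :=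
  inter_subset_of_forall_erase_subset (fun C x hx => hΓ.2.2.2 C ⟨x, hx⟩ x hx) hBA

end OptimalFilter

theorem switch_erase {c : Finset X → X} {A : Finset X} {x : X} (hcA : c A ∈ A) (hx : x ≠ c A)
    (hne : c A ≠ c (A.erase x)) : Switch c (A.erase x) A :=
  have hcx : c A ∈ A.erase x := mem_erase.mpr ⟨hx.symm, hcA⟩
  ⟨⟨c A, hcx⟩, erase_subset x A, hcx, hne.symm⟩

namespace ExplByOLA

variable {Γ : Finset X → Finset X} {rhd : X → X → Prop} {c : Finset X → X} {A B : Finset X} {x : X}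

theorem choice_mem (h : ExplByOLA Γ rhd c) (hA : A.Nonempty) : c A ∈ Γ A :=
  (h.2.2 A hA).1

theorem choice_mem_of_subset (h : ExplByOLA Γ rhd c) (hBA : B ⊆ A) (hcB : c A ∈ B) :
    c A ∈ Γ B :=
  h.1.inter_subset_of_subset hBA (mem_inter.mpr ⟨h.choice_mem ⟨c A, hBA hcB⟩, hcB⟩)

theorem rel_of_mem_of_ne (h : ExplByOLA Γ rhd c) (hA : A.Nonempty) (hx : x ∈ Γ A)
    (hne : x ≠ c A) : rhd (c A) x :=
  (h.2.2 A hA).2 x hx hne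

theorem rel_of_switch (h : ExplByOLA Γ rhd c) (hs : Switch c A B) : rhd (c A) (c B) := by
  obtain ⟨hA, hAB, hcB, hne⟩ := hs
  exact h.rel_of_mem_of_ne hA (h.choice_mem_of_subset hAB hcB) hne.symm

theorem notMem_of_switch (h : ExplByOLA Γ rhd c) (hs : Switch c A B) : c A ∉ Γ B :=
  (h.2.2 B (hs.1.mono hs.2.1)).not_of_rel h.2.1.1.1 (h.rel_of_switch hs)

theorem mem_of_switch_erase (h : ExplByOLA Γ rhd c) (hx : x ∈ A)
    (hs : Switch c (A.erase x) A) : x ∈ Γ A :=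
  h.1.mem_of_not_subset hx fun hsub => h.notMem_of_switch hs (hsub (h.choice_mem hs.1))

theorem notMem_pair_of_switch_erase (h : ExplByOLA Γ rhd c) (hx : x ∈ A)
    (hs : Switch c (A.erase x) A) : c (A.erase x) ∉ Γ {c (A.erase x), x} :=
  fun hpair => h.notMem_of_switch hs (h.1.mem_of_mem_pair hx hpair (h.choice_mem hs.1))

end ExplByOLA

theorem stmt_2_general {c : Finset X → X} {A : Finset X} {x : X} (hx : x ∈ A)
    (h1 : x ≠ c A) (h2 : c A ≠ c (A.erase x)) {Γ : Finset X → Finset X} {rhd : X → X → Prop}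
    (h : ExplByOLA Γ rhd c) :
    x ∈ Γ A ∧ c (A.erase x) ∉ Γ A ∧
      c (A.erase x) ∉ Γ {c (A.erase x), x} ∧
      c A ∈ Γ {c A, x} ∧
      rhd (c (A.erase x)) (c A) ∧ rhd (c A) x := by
  have hA : A.Nonempty := ⟨x, hx⟩
  have hcA : c A ∈ A := h.1.subset_menu hA (h.choice_mem hA)
  have hs : Switch c (A.erase x) A := switch_erase hcA h1 h2
  have hxΓ : x ∈ Γ A := h.mem_of_switch_erase hx hs
  have hpair : {c A, x} ⊆ A := insert_subset hcA (singleton_subset_iff.mpr hx)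
  exact ⟨hxΓ, h.notMem_of_switch hs, h.notMem_pair_of_switch_erase hx hs,
    h.choice_mem_of_subset hpair (mem_insert_self _ _), h.rel_of_switch hs,
    h.rel_of_mem_of_ne hA hxΓ h1⟩

theorem stmt_2 [Fintype X] [Nonempty X] (c : Finset X → X) (hc : ChoiceFun c)
    (hCOLA : COLA c) (A : Finset X) (hA : A.Nonempty) (x : X) (hx : x ∈ A)
    (h1 : x ≠ c A) (h2 : c A ≠ c (A.erase x)) :
    ∀ (Γ : Finset X → Finset X) (rhd : X → X → Prop), ExplByOLA Γ rhd c →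
      x ∈ Γ A ∧ c (A.erase x) ∉ Γ A ∧
        c (A.erase x) ∉ Γ {c (A.erase x), x} ∧
        c A ∈ Γ {c A, x} ∧
        rhd (c (A.erase x)) (c A) ∧ rhd (c A) x :=
  fun _ _ h => stmt_2_general hx h1 h2 h
end

section
/- For a choice function c on a finite nonempty set X, the following are equivalent: (i) c has a general-temptation representation; (ii) c admits a conspicuity based endogenous reference representation; (iii) c is a choice with salient limited attention. -/
open Finset

variable {X : Type*} [DecidableEq X]

/-!
In each of the three models a menu `A` has a reference point `m`: its maximum for `v` (ties broken),
its `≫`-maximum, or its `▷`-minimum. The last two models, with `≫` the reverse of `▷`, are both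
equivalent to one condition on `c`: discarding an unchosen alternative other than `m` does not
change the choice. Under this condition the menus with reference point `m` reveal a strict partial
order, which extends to a linear order and so, on a countable set, has an injective real utility
`U m`; and an agent who attends to the chosen alternative and to everything more conspicuous than it
has salient limited attention.

A temptation representation gives `U m` by breaking the ties of `x ↦ W (u x) (v x - v m)`. To go
back, represent `≫` by `v` and put `u = -v`. The point `(u x, v x - v m)` then lies on the
antidiagonal `r + s = -v m`, and distinct points of one antidiagonal are never comparable in the
plane. So `W` may order each of these countably many lines by the corresponding `U m`, provided that
it increases from one antidiagonal to the next; for this it jumps at each `r + s = -v m`, by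
summable amounts.
-/

section Utility

variable {α β : Type*}

theorem StrictLinear.swap {r : α → α → Prop} (hr : StrictLinear r) :
    StrictLinear (fun x y => r y x) := by
  obtain ⟨⟨hasymm, htrans⟩, htotal⟩ := hr
  exact ⟨⟨fun x y => hasymm y x, fun x y z hyx hzy => htrans z y x hzy hyx⟩,
    fun x y hne => (htotal x y hne).symm⟩

theorem strictPartial_gt_comp [Preorder β] (f : α → β) : StrictPartial (fun x y => f y < f x) :=
  ⟨fun _ _ => lt_asymm, fun _ _ _ hyx hzy => hzy.trans hyx⟩

theorem strictLinear_gt_comp [LinearOrder β] {f : α → β} (hf : Function.Injective f) :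
    StrictLinear (fun x y => f y < f x) :=
  ⟨strictPartial_gt_comp f, fun _ _ hne => (hf.ne hne).lt_or_gt.symm⟩

theorem StrictLinear.exists_isRMax {r : α → α → Prop} (hr : StrictLinear r) {A : Finset α}
    (hA : A.Nonempty) : ∃ m, IsRMax r (· ∈ A) m := by
  classical
  obtain ⟨⟨hasymm, htrans⟩, htotal⟩ := hr
  have : IsStrictTotalOrder α r :=
    { trichotomous := fun x y hxy hyx => by_contra fun hne => (htotal x y hne).elim hxy hyx
      irrefl := fun x hx => hasymm x x hx hx
      trans := htrans }
  let : LinearOrder α := linearOrderOfSTO r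
  exact ⟨A.min' hA, A.min'_mem hA, fun y hy hne => lt_of_le_of_ne (A.min'_le y hy) hne.symm⟩

theorem StrictPartial.exists_injective_utility [Countable α] {r : α → α → Prop}
    (hr : StrictPartial r) :
    ∃ f : α → ℝ, Function.Injective f ∧ ∀ x y, r x y → f y < f x := by
  have : IsStrictOrder α (fun x y => r y x) :=
    { irrefl := fun x hx => hr.1 x x hx hx
      trans := fun x y z hyx hzy => hr.2 z y x hzy hyx }
  let : PartialOrder α := partialOrderOfSO fun x y => r y x
  have : Countable (LinearExtension α) := ‹Countable α›
  obtain ⟨φ⟩ := Order.embedding_from_countable_to_dense (LinearExtension α) ℝ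
  have hinj : Function.Injective (toLinearExtension : α →o LinearExtension α) := fun _ _ h => h
  refine ⟨φ ∘ toLinearExtension, φ.injective.comp hinj, fun x y hxy => ?_⟩
  exact φ.strictMono (toLinearExtension.monotone.strictMono_of_injective hinj hxy)

theorem exists_injective_refinement [Countable α] [Preorder β] (f : α → β) :
    ∃ g : α → ℝ, Function.Injective g ∧ ∀ x y, f x < f y → g x < g y := by
  obtain ⟨g, hg, hfg⟩ := (strictPartial_gt_comp f).exists_injective_utility
  exact ⟨g, hg, fun x y => hfg y x⟩

theorem IsRMax.sup'_eq [SemilatticeSup β] {r : α → α → Prop} {A : Finset α} {m : α}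
    (hm : IsRMax r (· ∈ A) m) (hA : A.Nonempty) {v : α → β} (hv : ∀ x y, r x y → v y ≤ v x) :
    A.sup' hA v = v m := by
  refine le_antisymm (Finset.sup'_le hA v fun y hy => ?_) (Finset.le_sup' v hm.1)
  obtain rfl | hne := eq_or_ne y m
  · exact le_rfl
  · exact hv m y (hm.2 y hy hne)

end Utility

section LexicographicUtility

variable {α ι : Type*}

/-- The jump from `0` to `1` at `t₀`, whose value at `t₀` itself is `g a` squeezed into `(0, 1)`.
A weighted sum of such jumps is an increasing function of `t` that orders `α` by `g` at `t₀`. -/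
noncomputable def jumpAt (t₀ : ℝ) (g : α → ℝ) (t : ℝ) (a : α) : ℝ :=
  if t < t₀ then 0 else if t = t₀ then (g a).sigmoid else 1

theorem jumpAt_nonneg (t₀ : ℝ) (g : α → ℝ) (t : ℝ) (a : α) : 0 ≤ jumpAt t₀ g t a := by
  unfold jumpAt
  split_ifs
  exacts [le_rfl, Real.sigmoid_nonneg _, zero_le_one]

theorem jumpAt_le_one (t₀ : ℝ) (g : α → ℝ) (t : ℝ) (a : α) : jumpAt t₀ g t a ≤ 1 := by
  unfold jumpAt
  split_ifs
  exacts [zero_le_one, Real.sigmoid_le_one _, le_rfl]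

theorem jumpAt_self (t₀ : ℝ) (g : α → ℝ) (a : α) : jumpAt t₀ g t₀ a = (g a).sigmoid := by
  simp [jumpAt]

theorem jumpAt_eq_of_ne {t₀ t : ℝ} (h : t ≠ t₀) (g : α → ℝ) (a b : α) :
    jumpAt t₀ g t a = jumpAt t₀ g t b := by
  simp only [jumpAt, if_neg h]

theorem jumpAt_le_of_lt (t₀ : ℝ) (g : α → ℝ) {s t : ℝ} (hst : s < t) (a b : α) :
    jumpAt t₀ g s a ≤ jumpAt t₀ g t b := by
  obtain hs | hs := lt_or_ge s t₀
  · calc jumpAt t₀ g s a = 0 := if_pos hs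
      _ ≤ jumpAt t₀ g t b := jumpAt_nonneg t₀ g t b
  · have ht : t₀ < t := hs.trans_lt hst
    calc jumpAt t₀ g s a ≤ 1 := jumpAt_le_one t₀ g s a
      _ = jumpAt t₀ g t b := by simp only [jumpAt, if_neg ht.not_gt, if_neg ht.ne']

theorem exists_lexicographic_utility [Countable ι] {τ : ι → ℝ} (hτ : Function.Injective τ)
    (g : ι → α → ℝ) :
    ∃ F : ℝ → α → ℝ, (∀ t a, 0 ≤ F t a) ∧ (∀ s t a b, s < t → F s a < F t b) ∧
      ∀ i a b, g i a < g i b → F (τ i) a < F (τ i) b := by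
  obtain ⟨w, hwpos, C, hwC, -⟩ := NNReal.exists_pos_sum_of_countable one_ne_zero ι
  let term (t : ℝ) (a : α) (i : ι) : ℝ := w i * jumpAt (τ i) (g i) t a
  have term_nonneg (t a i) : 0 ≤ term t a i := mul_nonneg (w i).2 (jumpAt_nonneg _ _ t a)
  have summable_term (t a) : Summable (term t a) :=
    (NNReal.summable_coe.2 hwC.summable).of_nonneg_of_le (term_nonneg t a) fun i =>
      mul_le_of_le_one_right (w i).2 (jumpAt_le_one _ _ t a)
  refine ⟨fun t a => t.sigmoid + ∑' i, term t a i,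
    fun t a => add_nonneg t.sigmoid_nonneg (tsum_nonneg (term_nonneg t a)), ?_, ?_⟩
  · intro s t a b hst
    refine add_lt_add_of_lt_of_le (Real.sigmoid_lt hst) ?_
    refine (summable_term s a).tsum_le_tsum (fun i => ?_) (summable_term t b)
    exact mul_le_mul_of_nonneg_left (jumpAt_le_of_lt _ _ hst a b) (w i).2
  · intro i a b hab
    have term_lt : term (τ i) a i < term (τ i) b i := by
      simp only [term, jumpAt_self]
      exact mul_lt_mul_of_pos_left (Real.sigmoid_lt hab) (hwpos i)
    refine add_lt_add_right (Summable.tsum_lt_tsum (fun j => ?_) term_lt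
      (summable_term _ a) (summable_term _ b)) _
    obtain rfl | hne := eq_or_ne j i
    · exact term_lt.le
    · simp only [term, jumpAt_eq_of_ne (hτ.ne hne.symm) (g j) a b, le_refl]

end LexicographicUtility

section Temptation

variable {α : Type*} [Countable α] {c : Finset α → α}

theorem HasGTR.hasCER (h : HasGTR c) : HasCER c := by
  obtain ⟨u, v, W, -, -, -, hW⟩ := h
  obtain ⟨κ, hκ, hvκ⟩ := exists_injective_refinement v
  choose U hU hWU using fun m => exists_injective_refinement fun x => W (u x) (v x - v m)
  refine ⟨fun x y => κ y < κ x, U, strictLinear_gt_comp hκ, hU, fun A hA m hm => ?_⟩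
  have hsup : A.sup' hA v = v m :=
    hm.sup'_eq hA fun x y hyx => le_of_not_gt fun hlt => (hvκ x y hlt).not_gt hyx
  obtain ⟨hmem, hlt⟩ := hW A hA
  rw [hsup] at hlt
  exact ⟨hmem, fun x hx hne => hWU m _ _ (hlt x hx hne)⟩

theorem HasCER.hasGTR (h : HasCER c) : HasGTR c := by
  obtain ⟨gg, U, hgg, -, hU⟩ := h
  obtain ⟨v, hv, hggv⟩ := hgg.1.exists_injective_utility
  have hu : Function.Injective (-v) := neg_injective.comp hv
  obtain ⟨F, hF, hFlt, hFU⟩ :=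
    exists_lexicographic_utility hu fun m => Function.extend (-v) (U m) 0
  refine ⟨-v, v, fun r s => F (r + s) r, fun r s => hF _ _,
    fun r₁ r₂ s hr => hFlt _ _ _ _ (by linarith), fun r s₁ s₂ hs => hFlt _ _ _ _ (by linarith),
    fun A hA => ?_⟩
  obtain ⟨m, hm⟩ := hgg.exists_isRMax hA
  obtain ⟨hmem, hlt⟩ := hU A hA m hm
  refine ⟨hmem, fun x hx hne => ?_⟩
  have hsup : A.sup' hA v = v m := hm.sup'_eq hA fun x y hxy => (hggv x y hxy).le
  have antidiagonal (y : α) : (-v) y + (v y - A.sup' hA v) = (-v) m := by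
    simp only [hsup, Pi.neg_apply]
    ring
  simp only [antidiagonal]
  apply hFU
  simpa only [hu.extend_apply] using hlt x hx hne

end Temptation

theorem IsRMax.erase {r : X → X → Prop} {A : Finset X} {m x : X} (hm : IsRMax r (· ∈ A) m)
    (hne : x ≠ m) : IsRMax r (· ∈ A.erase x) m :=
  ⟨Finset.mem_erase.2 ⟨hne.symm, hm.1⟩, fun y hy => hm.2 y (Finset.mem_of_mem_erase hy)⟩

theorem IsRMax.union {r : X → X → Prop} {A B : Finset X} {m : X} (hA : IsRMax r (· ∈ A) m)
    (hB : IsRMax r (· ∈ B) m) : IsRMax r (· ∈ A ∪ B) m :=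
  ⟨Finset.mem_union_left B hA.1, fun y hy => (Finset.mem_union.1 hy).elim (hA.2 y) (hB.2 y)⟩

/-- Independence of irrelevant alternatives relative to a reference point: discarding from a menu an
unchosen alternative other than the `gg`-maximum does not change the choice. This is the condition
through which reference dependence and salient limited attention are compared. -/
def ReferenceIIA (gg : X → X → Prop) (c : Finset X → X) : Prop :=
  ∀ (A : Finset X) (m x : X), IsRMax gg (· ∈ A) m → x ∈ A → x ≠ m → x ≠ c A →
    c (A.erase x) = c A

/-- `x` is revealed preferred to `y` given the reference point `m`: it is chosen over `y` from a
menu with `gg`-maximum `m`. The utility `U m` is made to extend this order. -/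
def RevealedPreferredGiven (gg : X → X → Prop) (c : Finset X → X) (m x y : X) : Prop :=
  x ≠ y ∧ ∃ A : Finset X, IsRMax gg (· ∈ A) m ∧ y ∈ A ∧ c A = x

variable {c : Finset X → X}

namespace ReferenceIIA

variable {gg : X → X → Prop} {m : X} {A B : Finset X}

theorem choice_sdiff (h : ReferenceIIA gg c) (hm : IsRMax gg (· ∈ A) m) {S : Finset X}
    (hmS : m ∉ S) (hcS : c A ∉ S) : c (A \ S) = c A := by
  induction S using Finset.induction_on with
  | empty => rw [Finset.sdiff_empty]
  | insert x S _ ih =>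
    simp only [Finset.mem_insert, not_or] at hmS hcS
    have hS : c (A \ S) = c A := ih hmS.2 hcS.2
    have hmax : IsRMax gg (· ∈ A \ S) m :=
      ⟨Finset.mem_sdiff.2 ⟨hm.1, hmS.2⟩, fun y hy => hm.2 y (Finset.mem_sdiff.1 hy).1⟩
    rw [Finset.sdiff_insert]
    by_cases hx : x ∈ A \ S
    · rw [h (A \ S) m x hmax hx (Ne.symm hmS.1) (hS ▸ Ne.symm hcS.1), hS]
    · rw [Finset.erase_eq_of_notMem hx, hS]

theorem choice_eq_of_subset (h : ReferenceIIA gg c) (hm : IsRMax gg (· ∈ A) m) (hBA : B ⊆ A)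
    (hmB : m ∈ B) (hcB : c A ∈ B) : c B = c A := by
  rw [← Finset.sdiff_sdiff_eq_self hBA]
  exact h.choice_sdiff hm (fun hm' => (Finset.mem_sdiff.1 hm').2 hmB)
    fun hc' => (Finset.mem_sdiff.1 hc').2 hcB

theorem choice_union (h : ReferenceIIA gg c) (hc : ChoiceFun c) (hA : IsRMax gg (· ∈ A) m)
    (hB : IsRMax gg (· ∈ B) m) (hcB : c B ∈ A) : c (A ∪ B) = c A := by
  have hAB := hA.union hB
  have hmem : c (A ∪ B) ∈ A := by
    obtain hmemA | hmemB := Finset.mem_union.1 (hc (A ∪ B) ⟨m, hAB.1⟩)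
    · exact hmemA
    · rwa [← h.choice_eq_of_subset hAB Finset.subset_union_right hB.1 hmemB]
  exact (h.choice_eq_of_subset hAB Finset.subset_union_left hA.1 hmem).symm

theorem strictPartial_revealedPreferredGiven (h : ReferenceIIA gg c) (hc : ChoiceFun c) (m : X) :
    StrictPartial (RevealedPreferredGiven gg c m) := by
  have hasymm : Asym (RevealedPreferredGiven gg c m) := by
    rintro _ _ ⟨hne, A, hA, hyA, rfl⟩ ⟨-, B, hB, hxB, rfl⟩
    apply hne
    rw [← h.choice_union hc hA hB hyA, Finset.union_comm, h.choice_union hc hB hA hxB]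
  refine ⟨hasymm, fun x y z hxy hyz => ?_⟩
  have hxz : x ≠ z := by
    rintro rfl
    exact hasymm x y hxy hyz
  obtain ⟨-, A, hA, hyA, rfl⟩ := hxy
  obtain ⟨-, B, hB, hzB, rfl⟩ := hyz
  exact ⟨hxz, A ∪ B, hA.union hB, Finset.mem_union_right A hzB, h.choice_union hc hA hB hyA⟩

end ReferenceIIA

theorem CERrep.referenceIIA {gg : X → X → Prop} {U : X → X → ℝ} (h : CERrep c gg U) :
    ReferenceIIA gg c := by
  intro A m x hm _ hxm hxc
  have hm' := hm.erase hxm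
  obtain ⟨hmem, hlt⟩ := h.2.2 A ⟨m, hm.1⟩ m hm
  obtain ⟨hmem', hlt'⟩ := h.2.2 (A.erase x) ⟨m, hm'.1⟩ m hm'
  by_contra hne
  exact lt_asymm (hlt _ (Finset.mem_of_mem_erase hmem') hne)
    (hlt' _ (Finset.mem_erase.2 ⟨hxc.symm, hmem⟩) (Ne.symm hne))

theorem hasCER_iff_exists_referenceIIA [Countable X] (hc : ChoiceFun c) :
    HasCER c ↔ ∃ gg, StrictLinear gg ∧ ReferenceIIA gg c := by
  refine ⟨fun ⟨gg, U, h⟩ => ⟨gg, h.1, h.referenceIIA⟩, fun ⟨gg, hgg, h⟩ => ?_⟩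
  choose U hU hPU using fun m =>
    (h.strictPartial_revealedPreferredGiven hc m).exists_injective_utility
  exact ⟨gg, U, hgg, hU, fun A hA m hm =>
    ⟨hc A hA, fun x hx hne => hPU m _ _ ⟨hne.symm, A, hm, hx, rfl⟩⟩⟩

theorem ExplBySLA.referenceIIA {Γ : Finset X → Finset X} {rhd : X → X → Prop}
    (h : ExplBySLA Γ rhd c) : ReferenceIIA (fun x y => rhd y x) c := by
  obtain ⟨⟨⟨hasymm, -⟩, -⟩, ⟨-, hΓ⟩, hmax⟩ := h
  intro A m x hm hx hxm hxc
  have hcA := hmax A ⟨m, hm.1⟩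
  have hcE := hmax (A.erase x) ⟨m, (hm.erase hxm).1⟩
  have not_min : ¬ IsRMin rhd (· ∈ A) x := fun hmin =>
    hasymm _ _ (hmin.2 m hm.1 hxm.symm) (hm.2 x hx hxm)
  have not_max : ¬ IsRMax rhd (· ∈ Γ A) x := fun hmax' =>
    hasymm _ _ (hmax'.2 _ hcA.1 hxc.symm) (hcA.2 x hmax'.1 hxc)
  rw [← hΓ A ⟨x, hx⟩ x hx not_min not_max] at hcE
  by_contra hne
  exact hasymm _ _ (hcE.2 _ (Finset.mem_erase.2 ⟨hxc.symm, hcA.1⟩) (Ne.symm hne))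
    (hcA.2 _ (Finset.mem_of_mem_erase hcE.1) hne)

theorem ReferenceIIA.csla {gg : X → X → Prop} (h : ReferenceIIA gg c) (hgg : StrictLinear gg)
    (hc : ChoiceFun c) : CSLA c := by
  classical
  let Γ (B : Finset X) : Finset X := {y ∈ B | y = c B ∨ gg y (c B)}
  have hmax (A : Finset X) (hA : A.Nonempty) : IsRMax (fun x y => gg y x) (· ∈ Γ A) (c A) :=
    ⟨Finset.mem_filter.2 ⟨hc A hA, .inl rfl⟩,
      fun y hy hne => (Finset.mem_filter.1 hy).2.resolve_left hne⟩
  refine ⟨Γ, fun x y => gg y x, hgg.swap,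
    ⟨fun A hA => ⟨⟨c A, (hmax A hA).1⟩, Finset.filter_subset _ _⟩, ?_⟩, hmax⟩
  intro B hB x hx not_min not_max
  have hxc : x ≠ c B := fun h => not_max (h ▸ hmax B hB)
  obtain ⟨m, hm⟩ := hgg.exists_isRMax hB
  have hxm : x ≠ m := fun h => not_min (h ▸ hm)
  simp only [Γ, h B m x hm hx hxm hxc, Finset.filter_erase]

theorem csla_iff_exists_referenceIIA (hc : ChoiceFun c) :
    CSLA c ↔ ∃ gg, StrictLinear gg ∧ ReferenceIIA gg c :=
  ⟨fun ⟨_, rhd, h⟩ => ⟨fun x y => rhd y x, h.1.swap, h.referenceIIA⟩,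
    fun ⟨_, hgg, h⟩ => h.csla hgg hc⟩

theorem stmt_6_general [Countable X] (c : Finset X → X) (hc : ChoiceFun c) :
    (HasGTR c ↔ HasCER c) ∧ (HasCER c ↔ CSLA c) :=
  ⟨⟨HasGTR.hasCER, HasCER.hasGTR⟩,
    (hasCER_iff_exists_referenceIIA hc).trans (csla_iff_exists_referenceIIA hc).symm⟩

theorem stmt_6 [Fintype X] [Nonempty X] (c : Finset X → X) (hc : ChoiceFun c) :
    (HasGTR c ↔ HasCER c) ∧ (HasCER c ↔ CSLA c) :=
  stmt_6_general c hc
end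

section
/- A choice function c on a finite nonempty set X is rationalizable (i.e., satisfies Axiom α) if and only if it is a choice with selective salient limited attention. -/
/-!
A rationalizing order explains the choice with full attention, i.e. with the identity filter.
Conversely, under a selective filter, removing an unchosen item from a menu removes at most that
item from the filtered menu, so the chosen item is still the maximum and is still chosen. Iterating
gives Axiom α, and Axiom α makes the preference revealed by choices from pairs a linear order whose
maximum on each menu is the choice.
-/

open Finset

variable {X : Type*} [DecidableEq X]

omit [DecidableEq X] in
theorem IsRMax.unique {r : X → X → Prop} {P : X → Prop} {a b : X} (hr : Asym r)
    (ha : IsRMax r P a) (hb : IsRMax r P b) : a = b := by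
  by_contra hab
  exact hr a b (ha.2 b hb.1 (Ne.symm hab)) (hb.2 a ha.1 hab)

omit [DecidableEq X] in
theorem IsRMax.of_imp {r : X → X → Prop} {P Q : X → Prop} {a : X} (ha : IsRMax r P a)
    (hQP : ∀ y, Q y → P y) (hQa : Q a) : IsRMax r Q a :=
  ⟨hQa, fun y hy => ha.2 y (hQP y hy)⟩

/-- Axiom α (independence of irrelevant alternatives): shrinking a menu without removing the
chosen item leaves the choice unchanged. No nonemptiness is required: `c B ∈ A` implies it. -/
def SatisfiesAlpha (c : Finset X → X) : Prop :=
  ∀ ⦃A B : Finset X⦄, A ⊆ B → c B ∈ A → c A = c B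

theorem satisfiesAlpha_of_choice_erase_eq {c : Finset X → X}
    (herase : ∀ B : Finset X, ∀ x ∈ B, x ≠ c B → c (B.erase x) = c B) : SatisfiesAlpha c := by
  intro A B hAB hcB
  induction B using Finset.strongInduction with
  | H B ih =>
    rcases hAB.eq_or_ssubset with rfl | hss
    · rfl
    · obtain ⟨x, hxB, hxA⟩ := exists_of_ssubset hss
      have hcx : c (B.erase x) = c B := herase B x hxB (ne_of_mem_of_not_mem hcB hxA).symm
      calc c A = c (B.erase x) :=
            ih _ (erase_ssubset hxB) (subset_erase.2 ⟨hAB, hxA⟩) (hcx ▸ hcB)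
        _ = c B := hcx

section SelectiveFilter

variable {r : X → X → Prop} {Γ : Finset X → Finset X} {c : Finset X → X}

theorem SelectiveFilter.choice_erase_eq (hΓ : SelectiveFilter r Γ) (hr : Asym r)
    (hmax : ∀ A : Finset X, A.Nonempty → IsRMax r (· ∈ Γ A) (c A)) {B : Finset X} {x : X}
    (hxB : x ∈ B) (hx : x ≠ c B) : c (B.erase x) = c B := by
  have hB : B.Nonempty := ⟨x, hxB⟩
  have hcΓ : c B ∈ (Γ B).erase x := mem_erase.2 ⟨hx.symm, (hmax B hB).1⟩
  have hcB : c B ∈ B.erase x := erase_subset_erase x (hΓ.1 B hB).2 hcΓ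
  have hΓx : (Γ B).erase x = Γ (B.erase x) :=
    hΓ.2 B hB x hxB fun hxmax => hx (hxmax.unique hr (hmax B hB))
  have hmax_erase : IsRMax r (· ∈ Γ (B.erase x)) (c B) :=
    (hmax B hB).of_imp (fun _ hy => mem_of_mem_erase (hΓx ▸ hy)) (hΓx ▸ hcΓ)
  exact (hmax _ ⟨c B, hcB⟩).unique hr hmax_erase

theorem CSSLA.satisfiesAlpha (h : CSSLA c) : SatisfiesAlpha c := by
  obtain ⟨Γ, r, hr, hΓ, hmax⟩ := h
  exact satisfiesAlpha_of_choice_erase_eq fun _ _ => hΓ.choice_erase_eq hr.1.1 hmax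

end SelectiveFilter

/-- The strict preference revealed by binary choice: `x` is chosen over a different item `y` from
the menu `{x, y}`. -/
def PairPref (c : Finset X → X) (x y : X) : Prop :=
  x ≠ y ∧ c {x, y} = x

section PairPref

variable {c : Finset X → X}

theorem pairPref_asym (c : Finset X → X) : Asym (PairPref c) := by
  rintro x y ⟨hne, hx⟩ ⟨-, hy⟩
  exact hne (hx.symm.trans (pair_comm x y ▸ hy))

theorem ChoiceFun.pairPref_or_pairPref (hc : ChoiceFun c) {x y : X} (hne : x ≠ y) :
    PairPref c x y ∨ PairPref c y x := by
  have hmem : c {x, y} = x ∨ c {x, y} = y := by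
    simpa only [mem_insert, mem_singleton] using hc {x, y} (insert_nonempty x {y})
  exact hmem.imp (⟨hne, ·⟩) fun hy => ⟨hne.symm, pair_comm x y ▸ hy⟩

theorem SatisfiesAlpha.isRMax_pairPref (hα : SatisfiesAlpha c) (hc : ChoiceFun c) {A : Finset X}
    (hA : A.Nonempty) : IsRMax (PairPref c) (· ∈ A) (c A) := by
  refine ⟨hc A hA, fun y hy hne => ⟨hne.symm, ?_⟩⟩
  have hpair : {c A, y} ⊆ A := insert_subset (hc A hA) (singleton_subset_iff.2 hy)
  exact hα hpair (mem_insert_self _ _)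

theorem SatisfiesAlpha.pairPref_trans (hα : SatisfiesAlpha c) (hc : ChoiceFun c) {x y z : X}
    (hxy : PairPref c x y) (hyz : PairPref c y z) : PairPref c x z := by
  obtain ⟨m, hm, hmax⟩ : ∃ m, IsRMax (PairPref c) (· ∈ ({x, y, z} : Finset X)) m :=
    ⟨_, hα.isRMax_pairPref hc (insert_nonempty _ _)⟩
  have hmy : m ≠ y := by
    rintro rfl
    exact pairPref_asym c x m hxy (hmax x (by simp) hxy.1)
  have hmz : m ≠ z := by
    rintro rfl
    exact pairPref_asym c y m hyz (hmax y (by simp) hyz.1)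
  obtain rfl : m = x := by simpa only [mem_insert, mem_singleton, hmy, hmz, or_false] using hm
  exact hmax z (by simp) hmz.symm

theorem SatisfiesAlpha.strictLinear_pairPref (hα : SatisfiesAlpha c) (hc : ChoiceFun c) :
    StrictLinear (PairPref c) :=
  ⟨⟨pairPref_asym c, fun _ _ _ => hα.pairPref_trans hc⟩, fun _ _ => hc.pairPref_or_pairPref⟩

omit [DecidableEq X] in
theorem SatisfiesAlpha.rationalizable (hα : SatisfiesAlpha c) (hc : ChoiceFun c) :
    Rationalizable c := by
  classical
  exact ⟨PairPref c, hα.strictLinear_pairPref hc, fun _ => hα.isRMax_pairPref hc⟩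

end PairPref

theorem selectiveFilter_id (r : X → X → Prop) : SelectiveFilter r id :=
  ⟨fun A hA => ⟨hA, Subset.refl A⟩, fun _ _ _ _ _ => rfl⟩

theorem Rationalizable.cssla {c : Finset X → X} (h : Rationalizable c) : CSSLA c := by
  obtain ⟨r, hr, hmax⟩ := h
  exact ⟨id, r, hr, selectiveFilter_id r, hmax⟩

theorem stmt_10_general (c : Finset X → X) (hc : ChoiceFun c) : Rationalizable c ↔ CSSLA c :=
  ⟨fun h => h.cssla, fun h => h.satisfiesAlpha.rationalizable hc⟩

theorem stmt_10 [Fintype X] [Nonempty X] (c : Finset X → X) (hc : ChoiceFun c) :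
    Rationalizable c ↔ CSSLA c :=
  stmt_10_general c hc
end
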